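/- Let R = ℂ[∂]V be a Lie conformal algebra with trivial left-center and Q = ℂ[∂]x a Leibniz conformal algebra of rank 1 which is either abelian or the Virasoro Lie conformal algebra. If every conformal derivation of R is inner (CDer(R) = CInn(R)), then LHC²_R(Q,R) and LHC²(Q,R) each consist of a single class, namely the class of the trivial flag datum (D, T, Q₀) = (0, 0, 0) (with P = 0 in the abelian case and P = ∂ + 2λ in the Virasoro case). -/

import Mathlib

noncomputable section

/-- `g : ℂ → R` is (the evaluation of) a polynomial in `λ` with coefficients in `R`,
i.e. an element of `R[λ]`. -/
def IsPolyFun {R : Type*} [AddCommGroup R] [Module ℂ R] (g : ℂ → R) : Prop :=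
  ∃ (N : ℕ) (c : ℕ → R), ∀ l : ℂ, g l = ∑ i ∈ Finset.range N, l ^ i • c i

/-- A conformal bilinear map `U × V → W[λ]`, in evaluated form: `f_λ(∂u, v) = -λ f_λ(u,v)`
and `f_λ(u, ∂v) = (∂ + λ) f_λ(u,v)`. -/
structure IsConformalBilin {U V W : Type*}
    [AddCommGroup U] [Module ℂ U] [AddCommGroup V] [Module ℂ V]
    [AddCommGroup W] [Module ℂ W]
    (DU : Module.End ℂ U) (DV : Module.End ℂ V) (DW : Module.End ℂ W)
    (f : ℂ → U → V → W) : Prop where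
  add_left : ∀ (l : ℂ) (a a' : U) (b : V), f l (a + a') b = f l a b + f l a' b
  smul_left : ∀ (l c : ℂ) (a : U) (b : V), f l (c • a) b = c • f l a b
  add_right : ∀ (l : ℂ) (a : U) (b b' : V), f l a (b + b') = f l a b + f l a b'
  smul_right : ∀ (l c : ℂ) (a : U) (b : V), f l a (c • b) = c • f l a b
  poly : ∀ (a : U) (b : V), IsPolyFun (fun l => f l a b)
  conf_left : ∀ (l : ℂ) (a : U) (b : V), f l (DU a) b = (-l) • f l a b
  conf_right : ∀ (l : ℂ) (a : U) (b : V), f l a (DV b) = DW (f l a b) + l • f l a b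

/-- A Leibniz conformal algebra structure on the `ℂ[∂]`-module `(R, D)`:
a conformal bilinear `λ`-bracket satisfying the Jacobi identity. -/
structure IsLeibnizConformal {R : Type*} [AddCommGroup R] [Module ℂ R]
    (D : Module.End ℂ R) (br : ℂ → R → R → R) : Prop where
  bilin : IsConformalBilin D D D br
  jacobi : ∀ (l m : ℂ) (a b c : R),
    br l a (br m b c) = br (l + m) (br l a b) c + br m b (br l a c)

open Polynomial in
/-- The polynomial ring `ℂ[λ, ∂]`, realized as `(ℂ[∂])[λ]`: the *outer* variable is `λ`
and the *inner* variable is `∂`. -/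
abbrev CPoly2 : Type := Polynomial (Polynomial ℂ)

open Polynomial in
/-- Substitute `λ := lam` and `∂ := del` (simultaneously) in `p ∈ ℂ[λ,∂]`; the result is a
polynomial in the remaining formal variable. -/
noncomputable def sub2 (p : CPoly2) (lam del : Polynomial ℂ) : Polynomial ℂ :=
  Polynomial.eval₂ (Polynomial.aeval del).toRingHom lam p

open Polynomial in
/-- Evaluate `p ∈ ℂ[λ,∂]` at `λ := lam`, `∂ := del` with `lam del : ℂ`. -/
noncomputable def ev2 (p : CPoly2) (lam del : ℂ) : ℂ :=
  (p.eval (Polynomial.C lam)).eval del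

open Polynomial in
/-- Substitute `λ := -λ - ∂` in `p ∈ ℂ[λ,∂]` (a formal substitution inside `ℂ[λ,∂]`). -/
noncomputable def twistL (p : CPoly2) : CPoly2 :=
  Polynomial.eval₂ (Polynomial.C : Polynomial ℂ →+* CPoly2)
    (-(Polynomial.X : CPoly2) - Polynomial.C Polynomial.X) p

/-- `IsNegShift D g g'` encodes, for polynomial functions `ℂ → R`, the formal identity
`g'(λ) = g(-λ-∂)`: there are coefficients `c i` of `g` such that
`g' l = ∑ (-l - ∂)^i (c i)`, where `∂` acts via `D`. -/
def IsNegShift {R : Type*} [AddCommGroup R] [Module ℂ R] (D : Module.End ℂ R)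
    (g g' : ℂ → R) : Prop :=
  ∃ (N : ℕ) (c : ℕ → R),
    (∀ l : ℂ, g l = ∑ i ∈ Finset.range N, l ^ i • c i) ∧
    (∀ l : ℂ, g' l = ∑ i ∈ Finset.range N,
      ((((-l) • (1 : Module.End ℂ R) - D)) ^ i) (c i))

open Polynomial

/-- The data of a 4-tuple `(D_λ, T_λ, Q₀(λ,∂), P(λ,∂))` on `R`: `Dm` is a left conformal
linear map, `Tm` is a conformal linear map, `Q₀ ∈ R[λ]` and `P ∈ ℂ[λ,∂]`. -/
structure FCData (R : Type*) [AddCommGroup R] [Module ℂ R] (DR : Module.End ℂ R) where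
  Dm : ℂ → R → R
  Tm : ℂ → R → R
  Q0 : ℂ → R
  P : CPoly2
  Dm_lin : ∀ l : ℂ, IsLinearMap ℂ (Dm l)
  Dm_poly : ∀ a : R, IsPolyFun (fun l => Dm l a)
  Dm_conf : ∀ (l : ℂ) (a : R), Dm l (DR a) = (-l) • Dm l a
  Tm_lin : ∀ l : ℂ, IsLinearMap ℂ (Tm l)
  Tm_poly : ∀ a : R, IsPolyFun (fun l => Tm l a)
  Tm_conf : ∀ (l : ℂ) (a : R), Tm l (DR a) = DR (Tm l a) + l • Tm l a
  Q0_poly : IsPolyFun Q0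

/-- The conditions (fc1)–(fc8) defining the set `FC(R)` of flag datums
`(D_λ, T_λ, Q₀(λ,∂), P(λ,∂))` used for crossed products. -/
def IsFC {R : Type*} [AddCommGroup R] [Module ℂ R] (DR : Module.End ℂ R)
    (br : ℂ → R → R → R) (F : FCData R DR) : Prop :=
  -- (fc1)
  (∀ (l m : ℂ) (a b : R),
    F.Dm (l + m) (br l a b) = br l a (F.Dm m b) - br m b (F.Dm l a)) ∧
  -- (fc2)
  (∀ (l m : ℂ) (a b : R),
    F.Tm m (br l a b) = br l a (F.Tm m b) - br (l + m) (F.Dm l a) b) ∧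
  -- (fc3)
  (∀ (l m : ℂ) (a b : R),
    F.Tm m (br l a b) = br l a (F.Tm m b) + br (l + m) (F.Tm m a) b) ∧
  -- (fc4)
  (∀ (l m : ℂ) (a : R),
    Polynomial.aeval DR (sub2 F.P (Polynomial.C m) (Polynomial.C l + Polynomial.X))
        (F.Dm l a)
      = F.Dm (l + m) (F.Dm l a) + F.Tm m (F.Dm l a) - br l a (F.Q0 m)) ∧
  -- (fc5)
  (∀ (l m : ℂ) (a : R), F.Dm (l + m) (F.Tm m a) + F.Dm (l + m) (F.Dm l a) = 0) ∧
  -- (fc6)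
  (∀ l m : ℂ,
    ev2 F.P l (-l - m) • sub2 F.P (Polynomial.C (l + m)) Polynomial.X
      + sub2 F.P (Polynomial.C l) (Polynomial.C m + Polynomial.X)
          * sub2 F.P (Polynomial.C m) Polynomial.X
      - sub2 F.P (Polynomial.C m) (Polynomial.C l + Polynomial.X)
          * sub2 F.P (Polynomial.C l) Polynomial.X = 0) ∧
  -- (fc7)
  (∀ (l m : ℂ) (a : R),
    ev2 F.P l (-l - m) • F.Tm (l + m) a
      = F.Tm l (F.Tm m a) - br (l + m) (F.Q0 l) a - F.Tm m (F.Tm l a)) ∧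
  -- (fc8)
  (∀ l m : ℂ,
    F.Tm l (F.Q0 m)
      = F.Dm (l + m) (F.Q0 l) + ev2 F.P l (-l - m) • F.Q0 (l + m) + F.Tm m (F.Q0 l)
        + Polynomial.aeval DR
            (sub2 F.P (Polynomial.C l) (Polynomial.C m + Polynomial.X)) (F.Q0 m)
        - Polynomial.aeval DR
            (sub2 F.P (Polynomial.C m) (Polynomial.C l + Polynomial.X)) (F.Q0 l))

/-- A conformal derivation of the Leibniz conformal algebra `(R, D, br)`. -/
structure IsConformalDerivation {R : Type*} [AddCommGroup R] [Module ℂ R]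
    (D : Module.End ℂ R) (br : ℂ → R → R → R) (T : ℂ → R → R) : Prop where
  map_add : ∀ (l : ℂ) (a a' : R), T l (a + a') = T l a + T l a'
  map_smul : ∀ (l c : ℂ) (a : R), T l (c • a) = c • T l a
  poly : ∀ a : R, IsPolyFun (fun l => T l a)
  conf : ∀ (l : ℂ) (a : R), T l (D a) = D (T l a) + l • T l a
  der : ∀ (l m : ℂ) (a b : R), T l (br m a b) = br (l + m) (T l a) b + br m a (T l b)

/-- A conformal anti-derivation of the Leibniz conformal algebra `(R, D, br)`. -/
structure IsConformalAntiDerivation {R : Type*} [AddCommGroup R] [Module ℂ R]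
    (D : Module.End ℂ R) (br : ℂ → R → R → R) (T : ℂ → R → R) : Prop where
  map_add : ∀ (l : ℂ) (a a' : R), T l (a + a') = T l a + T l a'
  map_smul : ∀ (l c : ℂ) (a : R), T l (c • a) = c • T l a
  poly : ∀ a : R, IsPolyFun (fun l => T l a)
  conf : ∀ (l : ℂ) (a : R), T l (D a) = (-l) • T l a
  antider : ∀ (l m : ℂ) (a b : R),
    T (l + m) (br l a b) = br l a (T m b) - br m b (T l a)

/-- Conformal skew-symmetry `[a_λ b] = -[b_{-λ-∂} a]`; a Lie conformal algebra is a
Leibniz conformal algebra whose bracket is skew-symmetric. -/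
def IsSkewSymmBr {R : Type*} [AddCommGroup R] [Module ℂ R] (D : Module.End ℂ R)
    (br : ℂ → R → R → R) : Prop :=
  ∀ a b : R, IsNegShift D (fun l => br l a b) (fun l => -(br l b a))

open Polynomial in
/-- The polynomial `∂ + 2λ ∈ ℂ[λ,∂]` (inner variable `∂`, outer variable `λ`). -/
noncomputable def virasoroP : CPoly2 :=
  Polynomial.C Polynomial.X + (2 : ℂ) • Polynomial.X

/-!
Condition (fc3) says that `T` is a conformal derivation, so `T_λ = [u _λ ·]` for some `u`.
The remaining two identities are tested against brackets `[· _{λ+μ} b]`, which separate the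
elements of `R` because its left-center is trivial. Under such a bracket `∂` acts on the left
slot as the scalar `-λ-μ`, so that the formal substitution `μ ↦ -λ-∂` becomes an honest one.
Comparing (fc2) with (fc3) gives `D_λ(a) = -T_μ(a)` there, which is `[a _λ u]` by
skew-symmetry, and (fc7) together with the Jacobi identity determines `Q₀`.
-/

namespace IsConformalBilin

variable {U V W : Type*} [AddCommGroup U] [Module ℂ U] [AddCommGroup V] [Module ℂ V]
  [AddCommGroup W] [Module ℂ W]
  {DU : Module.End ℂ U} {DV : Module.End ℂ V} {DW : Module.End ℂ W} {f : ℂ → U → V → W}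

theorem isLinearMap_left (hf : IsConformalBilin DU DV DW f) (l : ℂ) (b : V) :
    IsLinearMap ℂ fun a => f l a b :=
  ⟨fun a a' => hf.add_left l a a' b, fun c a => hf.smul_left l c a b⟩

theorem neg_left (hf : IsConformalBilin DU DV DW f) (l : ℂ) (a : U) (b : V) :
    f l (-a) b = -f l a b :=
  (hf.isLinearMap_left l b).map_neg a

theorem sub_left (hf : IsConformalBilin DU DV DW f) (l : ℂ) (a a' : U) (b : V) :
    f l (a - a') b = f l a b - f l a' b :=
  (hf.isLinearMap_left l b).map_sub a a'

theorem sum_left (hf : IsConformalBilin DU DV DW f) {κ : Type*} (s : Finset κ) (l : ℂ)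
    (c : κ → U) (b : V) : f l (∑ i ∈ s, c i) b = ∑ i ∈ s, f l (c i) b :=
  map_sum (hf.isLinearMap_left l b).mk' c s

theorem pow_left (hf : IsConformalBilin DU DV DW f) (n : ℕ) (l : ℂ) (a : U) (b : V) :
    f l ((DU ^ n) a) b = (-l) ^ n • f l a b := by
  induction n with
  | zero => simp
  | succ n ih => rw [pow_succ', Module.End.mul_apply, hf.conf_left, ih, smul_smul, pow_succ']

theorem aeval_left (hf : IsConformalBilin DU DV DW f) (p : ℂ[X]) (l : ℂ) (a : U) (b : V) :
    f l (aeval DU p a) b = p.eval (-l) • f l a b := by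
  induction p using Polynomial.induction_on' with
  | add p q hp hq => rw [map_add, LinearMap.add_apply, hf.add_left, hp, hq, eval_add, add_smul]
  | monomial n c =>
    rw [aeval_monomial, eval_monomial, Module.End.mul_apply, Module.algebraMap_end_apply,
      hf.smul_left, hf.pow_left, mul_smul]

theorem negShift_left (hf : IsConformalBilin DU DV DW f) {g g' : ℂ → U}
    (hg : IsNegShift DU g g') (l m : ℂ) (b : V) : f (l + m) (g' l) b = f (l + m) (g m) b := by
  obtain ⟨N, c, hgc, hgc'⟩ := hg
  have shift_pow_eq_aeval (i : ℕ) :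
      ((-l) • (1 : Module.End ℂ U) - DU) ^ i = aeval DU ((C (-l) - X) ^ i) := by
    rw [map_pow, map_sub, aeval_C, aeval_X, Algebra.algebraMap_eq_smul_one]
  have eval_shift_pow (i : ℕ) : ((C (-l) - X) ^ i).eval (-(l + m)) = m ^ i := by simp
  rw [hgc', hgc, hf.sum_left, hf.sum_left]
  refine Finset.sum_congr rfl fun i _ => ?_
  rw [shift_pow_eq_aeval, hf.aeval_left, eval_shift_pow, hf.smul_left]

theorem eq_of_forall_left_eq (hf : IsConformalBilin DU DV DW f)
    (hker : ∀ a : U, (∀ (l : ℂ) (b : V), f l a b = 0) → a = 0) {a a' : U} (l : ℂ)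
    (h : ∀ (m : ℂ) (b : V), f (l + m) a b = f (l + m) a' b) : a = a' := by
  refine sub_eq_zero.mp (hker _ fun n b => ?_)
  rw [hf.sub_left, sub_eq_zero, ← add_sub_cancel l n]
  exact h (n - l) b

end IsConformalBilin

theorem eval_sub2_C_X (p : CPoly2) (l z : ℂ) : (sub2 p (C l) X).eval z = ev2 p l z := by
  have aeval_X_eq_id : (aeval (X : ℂ[X])).toRingHom = RingHom.id ℂ[X] := by ext <;> simp
  rw [sub2, ev2, aeval_X_eq_id, eval₂_id]

theorem IsSkewSymmBr.bracket_bracket_left {R : Type*} [AddCommGroup R] [Module ℂ R]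
    {D : Module.End ℂ R} {br : ℂ → R → R → R} (hskew : IsSkewSymmBr D br)
    (hbr : IsConformalBilin D D D br) (l m : ℂ) (a b c : R) :
    br (l + m) (br l a b) c = -br (l + m) (br m b a) c := by
  rw [← hbr.negShift_left (hskew b a), hbr.neg_left, neg_neg]

namespace IsFC

variable {R : Type*} [AddCommGroup R] [Module ℂ R] {DR : Module.End ℂ R}
  {br : ℂ → R → R → R} {F : FCData R DR}

theorem isConformalDerivation_Tm (hF : IsFC DR br F) : IsConformalDerivation DR br F.Tm where
  map_add l := (F.Tm_lin l).map_add
  map_smul l := (F.Tm_lin l).map_smul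
  poly := F.Tm_poly
  conf := F.Tm_conf
  der l m a b := by
    obtain ⟨-, -, fc3, -⟩ := hF
    rw [fc3 m l a b, add_comm l m, add_comm]

theorem bracket_Dm_left (hF : IsFC DR br F) (l m : ℂ) (a b : R) :
    br (l + m) (F.Dm l a) b = -br (l + m) (F.Tm m a) b := by
  obtain ⟨-, fc2, fc3, -⟩ := hF
  have fc2_eq_fc3 := (fc2 l m a b).symm.trans (fc3 l m a b)
  rw [sub_eq_add_neg] at fc2_eq_fc3
  exact neg_eq_iff_eq_neg.mp (add_left_cancel fc2_eq_fc3)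

theorem bracket_Q0_left (hF : IsFC DR br F) (l m : ℂ) (b : R) :
    br (l + m) (F.Q0 l) b
      = F.Tm l (F.Tm m b) - F.Tm m (F.Tm l b) - ev2 F.P l (-l - m) • F.Tm (l + m) b := by
  obtain ⟨-, -, -, -, -, -, fc7, -⟩ := hF
  rw [fc7]
  abel

theorem Dm_eq_of_Tm_inner (hF : IsFC DR br F) (hbr : IsConformalBilin DR DR DR br)
    (hskew : IsSkewSymmBr DR br)
    (hcenter : ∀ a : R, (∀ (l : ℂ) (b : R), br l a b = 0) → a = 0) {u : R}
    (hu : ∀ (l : ℂ) (a : R), F.Tm l a = br l u a) (l : ℂ) (a : R) : F.Dm l a = br l a u := by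
  refine hbr.eq_of_forall_left_eq hcenter l fun m b => ?_
  rw [hF.bracket_Dm_left, hu, hskew.bracket_bracket_left hbr l m a u b]

theorem Q0_eq_of_Tm_inner (hF : IsFC DR br F) (hLeib : IsLeibnizConformal DR br)
    (hcenter : ∀ a : R, (∀ (l : ℂ) (b : R), br l a b = 0) → a = 0) {u : R}
    (hu : ∀ (l : ℂ) (a : R), F.Tm l a = br l u a) (l : ℂ) :
    F.Q0 l = br l u u - aeval DR (sub2 F.P (C l) X) u := by
  refine hLeib.bilin.eq_of_forall_left_eq hcenter l fun m b => ?_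
  calc br (l + m) (F.Q0 l) b
      = br l u (br m u b) - br m u (br l u b) - ev2 F.P l (-l - m) • br (l + m) u b := by
        simp only [hF.bracket_Q0_left, hu]
    _ = br (l + m) (br l u u) b - ev2 F.P l (-l - m) • br (l + m) u b := by
        rw [hLeib.jacobi, add_sub_cancel_right]
    _ = br (l + m) (br l u u - aeval DR (sub2 F.P (C l) X) u) b := by
        rw [hLeib.bilin.sub_left, hLeib.bilin.aeval_left, eval_sub2_C_X, neg_add']

end IsFC

theorem lhc_trivial_of_cder_eq_cinn_general
    {R : Type*} [AddCommGroup R] [Module ℂ R] (DR : Module.End ℂ R)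
    (br : ℂ → R → R → R) (hLeib : IsLeibnizConformal DR br)
    (hskew : IsSkewSymmBr DR br)
    (hcenter : ∀ a : R, (∀ (l : ℂ) (b : R), br l a b = 0) → a = 0)
    (hCDerInn : ∀ T : ℂ → R → R, IsConformalDerivation DR br T →
      ∃ c : R, ∀ (l : ℂ) (a : R), T l a = br l c a)
    (F : FCData R DR) (hF : IsFC DR br F) :
    ∃ u₀ : R,
      (∀ (l : ℂ) (a : R), F.Dm l a = br l a u₀) ∧
      (∀ (l : ℂ) (a : R), F.Tm l a = br l u₀ a) ∧
      (∀ l : ℂ, F.Q0 l = br l u₀ u₀ - aeval DR (sub2 F.P (C l) X) u₀) := by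
  obtain ⟨u, hu⟩ := hCDerInn F.Tm hF.isConformalDerivation_Tm
  exact ⟨u, hF.Dm_eq_of_Tm_inner hLeib.bilin hskew hcenter hu, hu,
    hF.Q0_eq_of_Tm_inner hLeib hcenter hu⟩

/-- Let `R = ℂ[∂]V` be a Lie conformal algebra with trivial left-center and
`Q = ℂ[∂]x` a rank-one Leibniz conformal algebra which is abelian or Virasoro.  If every
conformal derivation of `R` is inner, then `LHC²_R(Q,R)` and `LHC²(Q,R)` consist of the
single class of the trivial flag datum `(0,0,0,P₀)`: every flag datum in `FC(R)` with
`P = P₀` is cohomologous (hence also equivalent, with `β = 1`) to `(0,0,0,P₀)`. -/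
theorem lhc_trivial_of_cder_eq_cinn
    {R Q : Type*} [AddCommGroup R] [Module ℂ R] [AddCommGroup Q] [Module ℂ Q]
    (DR : Module.End ℂ R) (DQ : Module.End ℂ Q)
    (br : ℂ → R → R → R) (hLeib : IsLeibnizConformal DR br)
    (hskew : IsSkewSymmBr DR br)
    (hcenter : ∀ a : R, (∀ (l : ℂ) (b : R), br l a b = 0) → a = 0)
    (ι : Type*) (v : ι → R)
    (hRfree : ∀ a : R, ∃! c : ι →₀ Polynomial ℂ,
      (c.sum fun i p => Polynomial.aeval DR p (v i)) = a)
    (x : Q) (hQfree : ∀ q : Q, ∃! p : Polynomial ℂ, Polynomial.aeval DQ p x = q)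
    (bq : ℂ → Q → Q → Q) (hbq : IsLeibnizConformal DQ bq)
    (hCDerInn : ∀ T : ℂ → R → R, IsConformalDerivation DR br T →
      ∃ c : R, ∀ (l : ℂ) (a : R), T l a = br l c a)
    (P₀ : CPoly2)
    (hcase :
      ((∀ (l : ℂ) (y z : Q), bq l y z = 0) ∧ P₀ = 0) ∨
      ((∀ l : ℂ, bq l x x = DQ x + (2 * l) • x) ∧ P₀ = virasoroP)) :
    ∀ F : FCData R DR, IsFC DR br F → F.P = P₀ →
      ∃ u₀ : R,
        (∀ (l : ℂ) (a : R), F.Dm l a = br l a u₀) ∧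
        (∀ (l : ℂ) (a : R), F.Tm l a = br l u₀ a) ∧
        (∀ l : ℂ, F.Q0 l
          = br l u₀ u₀
            - Polynomial.aeval DR (sub2 F.P (Polynomial.C l) Polynomial.X) u₀) := by
  exact fun F hF _ =>
    lhc_trivial_of_cder_eq_cinn_general DR br hLeib hskew hcenter hCDerInn F hF
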